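/- There is a universal constant C such that the following holds. Let I = [−1/2, 1/2), let k ≤ 0 be an integer, let ω be a dyadic interval of length 2^k, let ξ ∈ ω, and let φ_ω be a Schwartz function whose Fourier transform φ̂_ω is supported on ω, with D_1 := sup_x 2^k |φ̂_ω'(x)|. Define, for f ∈ L¹(ℝ) supported on 3I, T_ω[f](x) = (φ_ω * f)(x) − φ_ω(x) ∫_{3I} e^{−2πi ξ y} f(y) dy. Then ‖T_ω[f]‖_{L²(ℝ)} ≤ C D_1 2^{3k/2} ‖f‖_{L¹}. -/

import Mathlib

/-! The operator is an average of modulated differences of `φ`: with `e(t) = exp (2πit)`,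
`T_ω[f](x) = ∫ f(y) (φ (x - y) - e(-ξy) φ x) dy`.
By Minkowski's integral inequality (`eLpNorm_integral_mul_le`) it suffices to bound the `L²` norm
in `x` of the kernel, uniformly for `|y| ≤ 3/2`. By Plancherel this is the `L²` norm of
`η ↦ (e(-ηy) - e(-ξy)) φ̂(η)` (`fourier_kernel_apply`, `eLpNorm_kernel_le`). That function lives on
`ω`, where `|η - ξ| ≤ 2^k`, so the phase difference is at most `3π 2^k`; moreover `φ̂` vanishes at
the right endpoint of `ω`, so `|φ̂| ≤ 2^k sup |φ̂'| = D₁` by the mean value inequality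
(`enorm_le_iSup_deriv`). As `ω` has measure `2^k`, the kernel has `L²` norm at most
`3π 2^k · D₁ · 2^(k/2)`, and `C = 3π` works.
-/

open MeasureTheory Complex Set Real
open scoped ENNReal NNReal FourierTransform

/-- The dyadic interval `[2^k n, 2^k (n+1))`. -/
def dyadicI (k n : ℤ) : Set ℝ := Set.Ico ((2:ℝ) ^ k * n) ((2:ℝ) ^ k * (n + 1))

/-- Minkowski's integral inequality in `L²`: an average against `f` of functions of norm at most
`B` has norm at most `B ‖f‖₁`. -/
lemma eLpNorm_integral_mul_le {f : ℝ → ℂ} (hf : AEStronglyMeasurable f) {K : ℝ → ℝ → ℂ}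
    (hK : Continuous (Function.uncurry K)) {B : ℝ≥0∞}
    (hB : ∀ y, f y ≠ 0 → eLpNorm (fun x => K x y) 2 volume ≤ B) :
    eLpNorm (fun x => ∫ y, f y * K x y) 2 volume ≤ B * eLpNorm f 1 volume := by
  have key (u : ℝ → ℂ) : eLpNorm u 2 volume ^ 2 = ∫⁻ x, ‖u x‖ₑ ^ 2 := by
    simpa using eLpNorm_nnreal_pow_eq_lintegral (f := u) (p := 2) (μ := volume) (by norm_num)
  rw [← ENNReal.pow_le_pow_left_iff two_ne_zero, key, mul_pow, eLpNorm_one_eq_lintegral_enorm]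
  -- Cauchy-Schwarz in `y`, after splitting `|f| |K| = |f|^(1/2) (|f| |K|²)^(1/2)`
  have pt (x : ℝ) : ‖∫ y, f y * K x y‖ₑ ^ 2 ≤
      (∫⁻ y, ‖f y‖ₑ) * ∫⁻ y, ‖f y‖ₑ * ‖K x y‖ₑ ^ 2 := by
    have hKx : Continuous (K x) := hK.comp (Continuous.prodMk_right x)
    have h1 := ENNReal.lintegral_mul_norm_pow_le (μ := volume) (f := fun y => ‖f y‖ₑ)
      (g := fun y => ‖f y‖ₑ * ‖K x y‖ₑ ^ 2) hf.enorm
      (hf.enorm.mul (hKx.enorm.measurable.aemeasurable.pow_const 2))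
      (p := 1 / 2) (q := 1 / 2) (by norm_num) (by norm_num) (by norm_num)
    have h2 : ‖∫ y, f y * K x y‖ₑ ≤ (∫⁻ y, ‖f y‖ₑ) ^ (1 / 2 : ℝ) *
        (∫⁻ y, ‖f y‖ₑ * ‖K x y‖ₑ ^ 2) ^ (1 / 2 : ℝ) := by
      refine (enorm_integral_le_lintegral_enorm _).trans (le_of_eq_of_le ?_ h1)
      refine lintegral_congr fun y => ?_
      rw [← ENNReal.mul_rpow_of_nonneg _ _ (by norm_num), ← mul_assoc, ← sq, ← mul_pow,
        ← ENNReal.rpow_natCast, ← ENNReal.rpow_mul]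
      simp
    calc _ ≤ _ := pow_le_pow_left' h2 2
      _ = _ := by
        rw [← ENNReal.mul_rpow_of_nonneg _ _ (by norm_num), ← ENNReal.rpow_natCast,
          ← ENNReal.rpow_mul]
        simp
  have hmeas : AEMeasurable (Function.uncurry fun x y => ‖f y‖ₑ * ‖K x y‖ₑ ^ 2)
      ((volume : Measure ℝ).prod (volume : Measure ℝ)) :=
    hf.comp_snd.enorm.mul (hK.enorm.measurable.aemeasurable.pow_const 2)
  calc ∫⁻ x, ‖∫ y, f y * K x y‖ₑ ^ 2
      ≤ ∫⁻ x, (∫⁻ y, ‖f y‖ₑ) * ∫⁻ y, ‖f y‖ₑ * ‖K x y‖ₑ ^ 2 := lintegral_mono pt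
    _ = (∫⁻ y, ‖f y‖ₑ) * ∫⁻ y, ∫⁻ x, ‖f y‖ₑ * ‖K x y‖ₑ ^ 2 := by
        rw [← lintegral_lintegral_swap hmeas]
        exact lintegral_const_mul'' _ hmeas.lintegral_prod_right'
    _ ≤ (∫⁻ y, ‖f y‖ₑ) * ∫⁻ y, ‖f y‖ₑ * B ^ 2 := by
        gcongr with y
        by_cases hy : f y = 0
        · simp [hy]
        · rw [lintegral_const_mul' _ _ enorm_ne_top, ← key fun x => K x y]
          gcongr
          exact hB y hy
    _ = B ^ 2 * (∫⁻ y, ‖f y‖ₑ) ^ 2 := by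
        rw [lintegral_mul_const'' _ hf.enorm]; ring

/-- A differentiable function supported on a dyadic interval of length `2^k` is bounded by
`2^k sup |g'|`. -/
lemma enorm_le_iSup_deriv {k n : ℤ} {g : ℝ → ℂ} (hg : Differentiable ℝ g)
    (hs : Function.support g ⊆ dyadicI k n) (η : ℝ) :
    ‖g η‖ₑ ≤ ⨆ x : ℝ, (2:ℝ≥0∞) ^ k * (‖deriv g x‖₊ : ℝ≥0∞) := by
  set D := ⨆ x : ℝ, (2:ℝ≥0∞) ^ k * (‖deriv g x‖₊ : ℝ≥0∞)
  by_cases htop : D = ⊤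
  · simp [htop]
  by_cases hη : g η = 0
  · simp [hη]
  have hmem : η ∈ dyadicI k n := hs hη
  have h2 : (0:ℝ) < 2 ^ k := by positivity
  -- the interval is half-open, so `g` vanishes at its right endpoint
  have hend : g ((2:ℝ) ^ k * (n + 1)) = 0 := by
    by_contra h
    exact lt_irrefl _ (hs h).2
  have hder (x : ℝ) : ‖deriv g x‖ ≤ D.toReal / 2 ^ k := by
    rw [le_div_iff₀' h2]
    have h := ENNReal.toReal_mono htop
      (le_iSup (fun x : ℝ => (2:ℝ≥0∞) ^ k * (‖deriv g x‖₊ : ℝ≥0∞)) x)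
    have h2' : ((2:ℝ≥0∞) ^ k).toReal = 2 ^ k := by
      rw [← ENNReal.rpow_intCast, ← ENNReal.toReal_rpow, ENNReal.toReal_ofNat, Real.rpow_intCast]
    simpa [h2'] using h
  have hmv := convex_univ.norm_image_sub_le_of_norm_deriv_le (𝕜 := ℝ) (f := g)
    (fun x _ => hg x) (fun x _ => hder x) (mem_univ ((2:ℝ) ^ k * (n + 1))) (mem_univ η)
  rw [hend, sub_zero] at hmv
  have hlen : ‖η - (2:ℝ) ^ k * (n + 1)‖ ≤ 2 ^ k := by
    rw [Real.norm_eq_abs, abs_le]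
    have h := hmem.1
    have h' := hmem.2
    constructor <;> linarith
  have : ‖g η‖ ≤ D.toReal := by
    calc ‖g η‖ ≤ _ := hmv
      _ ≤ D.toReal / 2 ^ k * 2 ^ k := by gcongr
      _ = D.toReal := by field_simp
  rw [← ofReal_norm]
  exact ENNReal.ofReal_le_of_le_toReal this

/-- Translation becomes modulation, so the kernel `φ (· - y) - c φ` has Fourier transform
`(e(-ηy) - c) φ̂ η`. -/
lemma fourier_kernel_apply (φ : SchwartzMap ℝ ℂ) (y : ℝ) (c : ℂ) (η : ℝ) :
    (𝓕 (φ.compSubConstCLM ℂ y - c • φ) : SchwartzMap ℝ ℂ) η =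
      (Complex.exp (-(2 * (π : ℂ) * Complex.I * (η : ℂ) * (y : ℂ))) - c) * 𝓕 (⇑φ) η := by
  have htr : 𝓕 (φ.compSubConstCLM ℂ y) η =
      Complex.exp (-(2 * (π : ℂ) * Complex.I * (η : ℂ) * (y : ℂ))) * 𝓕 (⇑φ) η := by
    rw [SchwartzMap.fourier_coe, Real.fourier_real_eq_integral_exp_smul,
      Real.fourier_real_eq_integral_exp_smul, ← integral_const_mul,
      ← integral_add_right_eq_self _ y]
    refine integral_congr_ae (ae_of_all _ fun v => ?_)
    simp only [SchwartzMap.compSubConstCLM_apply, add_sub_cancel_right, smul_eq_mul, ← mul_assoc,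
      ← Complex.exp_add]
    congr 2
    push_cast
    ring
  have hsub : 𝓕 (φ.compSubConstCLM ℂ y - c • φ) = 𝓕 (φ.compSubConstCLM ℂ y) - c • 𝓕 φ := by
    simp only [← SchwartzMap.fourierTransformCLM_apply (𝕜 := ℂ), map_sub, map_smul]
  rw [hsub, sub_apply, smul_apply, htr, SchwartzMap.fourier_coe]
  simp only [smul_eq_mul]
  ring

lemma norm_exp_sub_exp_le (ξ η y : ℝ) :
    ‖Complex.exp (-(2 * (π : ℂ) * Complex.I * (η : ℂ) * (y : ℂ))) -
      Complex.exp (-(2 * (π : ℂ) * Complex.I * (ξ : ℂ) * (y : ℂ)))‖ ≤ 2 * π * |η - ξ| * |y| := by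
  have h : Complex.exp (-(2 * (π : ℂ) * Complex.I * (η : ℂ) * (y : ℂ))) -
      Complex.exp (-(2 * (π : ℂ) * Complex.I * (ξ : ℂ) * (y : ℂ))) =
      Complex.exp ((-(2 * π * ξ * y) : ℝ) * Complex.I) *
        (Complex.exp (Complex.I * (-(2 * π * (η - ξ) * y) : ℝ)) - 1) := by
    rw [mul_sub, ← Complex.exp_add, mul_one]
    congr 2 <;> (push_cast; ring)
  rw [h, norm_mul, Complex.norm_exp_ofReal_mul_I, one_mul]
  refine Real.norm_exp_I_mul_ofReal_sub_one_le.trans (le_of_eq ?_)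
  simp [abs_of_pos Real.pi_pos]

/-- The `L²` bound for the kernel `x ↦ φ (x - y) - e(-ξy) φ x`, obtained on the Fourier side. -/
lemma eLpNorm_kernel_le {k n : ℤ} {ξ : ℝ} (hξ : ξ ∈ dyadicI k n) {φ : SchwartzMap ℝ ℂ}
    (hs : Function.support (𝓕 ⇑φ) ⊆ dyadicI k n) {y : ℝ} (hy : |y| ≤ 3 / 2) :
    eLpNorm (fun x => φ (x - y) -
        Complex.exp (-(2 * (π : ℂ) * Complex.I * (ξ : ℂ) * (y : ℂ))) * φ x) 2 volume ≤
      ENNReal.ofReal (3 * π) * (⨆ x : ℝ, (2:ℝ≥0∞) ^ k * (‖deriv (𝓕 ⇑φ) x‖₊ : ℝ≥0∞)) *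
        (2:ℝ≥0∞) ^ (3 * (k : ℝ) / 2) := by
  set D := ⨆ x : ℝ, (2:ℝ≥0∞) ^ k * (‖deriv (𝓕 ⇑φ) x‖₊ : ℝ≥0∞)
  set c := Complex.exp (-(2 * (π : ℂ) * Complex.I * (ξ : ℂ) * (y : ℂ)))
  obtain ⟨h, hh, hF⟩ : ∃ h : SchwartzMap ℝ ℂ, (⇑h = fun x => φ (x - y) - c * φ x) ∧
      ∀ η, (𝓕 h : SchwartzMap ℝ ℂ) η =
        (Complex.exp (-(2 * (π : ℂ) * Complex.I * (η : ℂ) * (y : ℂ))) - c) * 𝓕 (⇑φ) η :=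
    ⟨φ.compSubConstCLM ℂ y - c • φ, rfl, fourier_kernel_apply φ y c⟩
  have hpl : eLpNorm (⇑h) 2 volume = eLpNorm (⇑(𝓕 h : SchwartzMap ℝ ℂ)) 2 volume := by
    have := SchwartzMap.norm_fourier_toL2_eq h
    rw [SchwartzMap.norm_toLp, SchwartzMap.norm_toLp] at this
    have h1 : eLpNorm (⇑(𝓕 h : SchwartzMap ℝ ℂ)) 2 volume ≠ ⊤ := ((𝓕 h).memLp 2 volume).2.ne
    have h2 : eLpNorm (⇑h) 2 volume ≠ ⊤ := (h.memLp 2 volume).2.ne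
    exact ((ENNReal.toReal_eq_toReal_iff' h1 h2).1 this).symm
  have hsupp : Function.support (⇑(𝓕 h : SchwartzMap ℝ ℂ)) ⊆ dyadicI k n := by
    intro η hη
    apply hs
    intro h0
    exact hη ((hF η).trans (by rw [h0, mul_zero]))
  have hdiff : Differentiable ℝ (𝓕 ⇑φ) := by
    rw [← SchwartzMap.fourier_coe]; exact (𝓕 φ : SchwartzMap ℝ ℂ).differentiable
  have hbd : ∀ η ∈ dyadicI k n, ‖(𝓕 h : SchwartzMap ℝ ℂ) η‖ₑ ≤
      ENNReal.ofReal (3 * π) * ENNReal.ofReal (2 ^ k) * D := by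
    intro η hη
    rw [hF, enorm_mul, ← ENNReal.ofReal_mul (by positivity)]
    refine mul_le_mul' ?_ (enorm_le_iSup_deriv hdiff hs η)
    rw [← ofReal_norm]
    refine ENNReal.ofReal_le_ofReal ((norm_exp_sub_exp_le ξ η y).trans ?_)
    have hd : |η - ξ| ≤ 2 ^ k := by
      obtain ⟨a, b⟩ := hη
      obtain ⟨a', b'⟩ := hξ
      rw [abs_le]
      constructor <;> linarith
    calc 2 * π * |η - ξ| * |y| ≤ 2 * π * 2 ^ k * (3 / 2) := by gcongr
      _ = 3 * π * 2 ^ k := by ring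
  have hpow : ENNReal.ofReal ((2:ℝ) ^ k) = (2:ℝ≥0∞) ^ (k : ℝ) := by
    rw [← Real.rpow_intCast, ← ENNReal.ofReal_rpow_of_pos two_pos, ENNReal.ofReal_ofNat]
  have hvol : volume (dyadicI k n) = (2:ℝ≥0∞) ^ (k : ℝ) := by
    rw [dyadicI, Real.volume_Ico, ← hpow]
    congr 1
    ring
  rw [← hh, hpl, ← eLpNorm_restrict_eq_of_support_subset hsupp]
  refine (eLpNorm_le_of_ae_enorm_bound
    ((ae_restrict_iff' measurableSet_Ico).2 (ae_of_all _ hbd))).trans (le_of_eq ?_)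
  have he : (2:ℝ≥0∞) ^ (3 * (k : ℝ) / 2) =
      (2:ℝ≥0∞) ^ (k : ℝ) * ((2:ℝ≥0∞) ^ (k : ℝ)) ^ (2⁻¹ : ℝ) := by
    rw [← ENNReal.rpow_mul, ← ENNReal.rpow_add _ _ two_ne_zero (by simp)]
    congr 1
    ring
  rw [Measure.restrict_apply_univ, ← dyadicI, hvol, hpow, he, smul_eq_mul, ENNReal.toReal_ofNat]
  ring

/-- The `L¹(3I) → L²(ℝ)` bound for `T_ω[f](x) = (φ_ω * f)(x) - φ_ω(x) ∫_{3I} e^{-2πiξy} f(y) dy`,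
where `I = [-1/2, 1/2)`, `3I = [-3/2, 3/2)`, `ω` is a dyadic interval of length `2^k ≤ 1`
containing `ξ`, and `D_1 = sup_x 2^k |φ̂_ω'(x)|`:
`‖T_ω[f]‖_{L²} ≤ C D_1 2^{3k/2} ‖f‖_{L¹}`. -/
theorem T_omega_L2_bound :
    ∃ C : ℝ≥0, ∀ (k n : ℤ), k ≤ 0 → ∀ ξ : ℝ, ξ ∈ dyadicI k n →
      ∀ φ : SchwartzMap ℝ ℂ, Function.support (𝓕 ⇑φ) ⊆ dyadicI k n →
      ∀ f : ℝ → ℂ, Integrable f →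
        Function.support f ⊆ Set.Ico (-(3/2) : ℝ) (3/2) →
      eLpNorm (fun x : ℝ => (∫ y : ℝ, f y * φ (x - y)) -
          φ x * ∫ y in Set.Ico (-(3/2) : ℝ) (3/2),
            Complex.exp (-(2 * (π : ℂ) * Complex.I * (ξ : ℂ) * (y : ℂ))) * f y) 2 volume
        ≤ C * (⨆ x : ℝ, (2:ℝ≥0∞) ^ k * (‖deriv (𝓕 ⇑φ) x‖₊ : ℝ≥0∞)) *
          (2:ℝ≥0∞) ^ (3 * (k : ℝ) / 2) * eLpNorm f 1 volume := by
  refine ⟨Real.toNNReal (3 * π), fun k n _ ξ hξ φ hs f hf hfs => ?_⟩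
  have hE : Continuous fun y : ℝ =>
      Complex.exp (-(2 * (π : ℂ) * Complex.I * (ξ : ℂ) * (y : ℂ))) := by fun_prop
  have hEn (y : ℝ) : ‖Complex.exp (-(2 * (π : ℂ) * Complex.I * (ξ : ℂ) * (y : ℂ)))‖ ≤ 1 := by
    simp [Complex.norm_exp]
  -- `f` vanishes off `3I`, so both terms combine into one integral over the whole line
  have heq : (fun x : ℝ => (∫ y : ℝ, f y * φ (x - y)) -
      φ x * ∫ y in Set.Ico (-(3/2) : ℝ) (3/2),
        Complex.exp (-(2 * (π : ℂ) * Complex.I * (ξ : ℂ) * (y : ℂ))) * f y) =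
      fun x => ∫ y, f y * (φ (x - y) -
        Complex.exp (-(2 * (π : ℂ) * Complex.I * (ξ : ℂ) * (y : ℂ))) * φ x) := by
    ext x
    rw [setIntegral_eq_integral_of_forall_compl_eq_zero, ← integral_const_mul, ← integral_sub]
    · refine integral_congr_ae (ae_of_all _ fun y => ?_)
      simp only
      ring
    · obtain ⟨M, hM⟩ : ∃ M, ∀ z, ‖φ z‖ ≤ M := ⟨_, φ.norm_le_seminorm ℝ⟩
      exact hf.mul_bdd (c := M)
        (φ.continuous.comp (continuous_const.sub continuous_id)).aestronglyMeasurable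
        (ae_of_all _ fun y => hM _)
    · exact (hf.bdd_mul hE.aestronglyMeasurable (ae_of_all _ hEn)).const_mul _
    · intro y hy
      rw [Function.notMem_support.1 fun h => hy (hfs h), mul_zero]
  rw [heq]
  refine eLpNorm_integral_mul_le hf.aestronglyMeasurable (K := fun x y => φ (x - y) -
        Complex.exp (-(2 * (π : ℂ) * Complex.I * (ξ : ℂ) * (y : ℂ))) * φ x) ?_ fun y hy => ?_
  · have hφ := φ.continuous
    unfold Function.uncurry
    fun_prop
  · have hm := hfs hy
    exact eLpNorm_kernel_le hξ hs (abs_le.2 ⟨hm.1, hm.2.le⟩)
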